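/- Define the rescaled functions ũ_{1,p}(r) := p·(u_p(ρ_p¹·r) − u_p(0))/u_p(0), which are defined for 0 ≤ r < 1/ρ_p¹, and let U(r) := log( 4(2+α)⁴ / (2(2+α)² + r^{2+α})² ). Then ũ_{1,p} converges to U in C¹_loc([0,∞)) as p → ∞; that is, for every compact set K ⊂ [0,∞) there is p_K such that K ⊂ [0, 1/ρ_p¹) for all p > p_K, and sup_{r∈K} |ũ_{1,p}(r) − U(r)| → 0 and sup_{r∈K} |ũ_{1,p}′(r) − U′(r)| → 0 as p → ∞. -/

import Mathlib

open Real Set Filter MeasureTheory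

lemma nonneg_of_hasDerivAt {F F' : ℝ → ℝ} {R : ℝ} (hc : ContinuousOn F (Icc 0 R)) (h0 : F 0 = 0)
    (hd : ∀ r ∈ Ioo 0 R, HasDerivAt F (F' r) r) (hn : ∀ r ∈ Ioo 0 R, 0 ≤ F' r) :
    ∀ r ∈ Icc 0 R, 0 ≤ F r := by
  have hm : MonotoneOn F (Icc 0 R) := by
    apply monotoneOn_of_deriv_nonneg (convex_Icc 0 R) hc
    · rw [interior_Icc]; exact fun r hr => (hd r hr).differentiableAt.differentiableWithinAt
    · rw [interior_Icc]; intro r hr; rw [(hd r hr).deriv]; exact hn r hr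
  intro r hr
  have := hm (left_mem_Icc.2 (hr.1.trans hr.2)) hr hr.1
  rwa [h0] at this

/-- A priori bounds for the rescaled solution. -/
lemma apriori {v dv f : ℝ → ℝ} {α R : ℝ} (hα : 0 ≤ α)
    (hv : ContinuousOn v (Icc 0 R)) (hv0 : v 0 = 0)
    (hvd : ∀ r ∈ Ioo 0 R, HasDerivAt v (dv r) r)
    (hz : ContinuousOn (fun r => r * dv r) (Icc 0 R))
    (hzd : ∀ r ∈ Ioo 0 R, HasDerivAt (fun r => r * dv r) (-(r ^ (1 + α) * f r)) r)
    (hf0 : ∀ r ∈ Ioo 0 R, 0 ≤ f r)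
    (hf1 : (∀ r ∈ Ioo 0 R, v r ≤ 0) → ∀ r ∈ Ioo 0 R, f r ≤ 1) :
    (∀ r ∈ Icc 0 R, v r ≤ 0) ∧ (∀ r ∈ Icc 0 R, -(r ^ (2 + α) / (2 + α) ^ 2) ≤ v r) := by
  have hb : 0 < 2 + α := by linarith
  have h1 : ∀ r ∈ Icc 0 R, 0 ≤ -(r * dv r) := by
    apply nonneg_of_hasDerivAt (F' := fun r => r ^ (1 + α) * f r) hz.neg (by simp)
    · intro r hr; simpa using (hzd r hr).neg
    · intro r hr; exact mul_nonneg (rpow_nonneg hr.1.le _) (hf0 r hr)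
  have h2 : ∀ r ∈ Icc 0 R, 0 ≤ -(v r) := by
    apply nonneg_of_hasDerivAt (F' := fun r => - dv r) hv.neg (by simp [hv0])
    · intro r hr; exact (hvd r hr).neg
    · intro r hr
      have := h1 r (Ioo_subset_Icc_self hr)
      have := hr.1
      by_contra! hh
      nlinarith
  have h3 : ∀ r ∈ Ioo 0 R, f r ≤ 1 := hf1 fun r hr => by
    linarith [h2 r (Ioo_subset_Icc_self hr)]
  have hpc : Continuous fun r : ℝ => r ^ (2 + α) := Real.continuous_rpow_const hb.le
  have hpd : ∀ r ∈ Ioo 0 R, HasDerivAt (fun r : ℝ => r ^ (2 + α)) ((2 + α) * r ^ (1 + α)) r := by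
    intro r hr
    have := Real.hasDerivAt_rpow_const (x := r) (p := 2 + α) (Or.inl hr.1.ne')
    rwa [show 2 + α - 1 = 1 + α by ring] at this
  have h4 : ∀ r ∈ Icc 0 R, 0 ≤ r ^ (2 + α) / (2 + α) + r * dv r := by
    apply nonneg_of_hasDerivAt (F' := fun r => r ^ (1 + α) - r ^ (1 + α) * f r)
      ((hpc.div_const _).continuousOn.add hz) (by simp [zero_rpow hb.ne'])
    · intro r hr
      refine (((hpd r hr).div_const (2 + α)).add (hzd r hr)).congr_deriv ?_
      field_simp
      ring
    · intro r hr
      have := rpow_nonneg hr.1.le (1 + α)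
      nlinarith [h3 r hr]
  have h5 : ∀ r ∈ Icc 0 R, 0 ≤ r ^ (2 + α) / (2 + α) ^ 2 + v r := by
    apply nonneg_of_hasDerivAt (F' := fun r => r ^ (1 + α) / (2 + α) + dv r)
      ((hpc.div_const _).continuousOn.add hv) (by simp [zero_rpow hb.ne', hv0])
    · intro r hr
      refine (((hpd r hr).div_const ((2 + α) ^ 2)).add (hvd r hr)).congr_deriv ?_
      field_simp
    · intro r hr
      have h := h4 r (Ioo_subset_Icc_self hr)
      rw [show 2 + α = 1 + α + 1 by ring, rpow_add_one hr.1.ne'] at h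
      rw [show 2 + α = 1 + α + 1 by ring]
      have h' : 0 ≤ r * (r ^ (1 + α) / (1 + α + 1) + dv r) := by
        calc 0 ≤ _ := h
          _ = _ := by ring
      exact nonneg_of_mul_nonneg_right h' hr.1
  exact ⟨fun r hr => by linarith [h2 r hr], fun r hr => by linarith [h5 r hr]⟩

/-- Singular Gronwall estimate. -/
lemma gron {d dd g : ℝ → ℝ} {α R ε : ℝ} (hα : 0 ≤ α) (hR : 0 < R) (hε : 0 ≤ ε)
    (hd : ContinuousOn d (Icc 0 R)) (hd0 : d 0 = 0)
    (hdd : ∀ r ∈ Ioo 0 R, HasDerivAt d (dd r) r)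
    (hz : ContinuousOn (fun r => r * dd r) (Icc 0 R))
    (hzd : ∀ r ∈ Ioo 0 R, HasDerivAt (fun r => r * dd r) (-(r ^ (1 + α) * g r)) r)
    (hg : ∀ r ∈ Ioo 0 R, |g r| ≤ ε + |d r|) :
    ∀ r ∈ Ioo 0 R, |d r| ≤ gronwallBound 0 (1 + R ^ α) (R ^ α * ε) R ∧
      |dd r| ≤ gronwallBound 0 (1 + R ^ α) (R ^ α * ε) R := by
  set A := R ^ α with hA
  have hA0 : 0 ≤ A := rpow_nonneg hR.le _
  set e : ℝ → ℝ := fun s => |d (max 0 (min s R))| with he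
  have hec : Continuous e := by
    apply Continuous.abs
    apply hd.comp_continuous (by fun_prop)
    intro s
    exact ⟨le_max_left _ _, max_le hR.le (min_le_right _ _)⟩
  have hee : ∀ r ∈ Icc 0 R, e r = |d r| := by
    intro r hr
    simp only [he]
    rw [min_eq_left hr.2, max_eq_right hr.1]
  set φ : ℝ → ℝ := fun r => ∫ s in (0:ℝ)..r, A * (ε + e s) with hφ
  have hφd : ∀ r, HasDerivAt φ (A * (ε + e r)) r := fun r =>
      ((by fun_prop : Continuous fun s => A * (ε + e s)).integral_hasStrictDerivAt 0 r).hasDerivAt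
  have hφc : Continuous φ := continuous_iff_continuousAt.2 fun r => (hφd r).continuousAt
  have hφ00 : φ 0 = 0 := by simp [hφ]
  set ψ : ℝ → ℝ := fun r => ∫ s in (0:ℝ)..r, φ s with hψ
  have hψd : ∀ r, HasDerivAt ψ (φ r) r := fun r =>
    (hφc.integral_hasStrictDerivAt 0 r).hasDerivAt
  have hψc : Continuous ψ := continuous_iff_continuousAt.2 fun r => (hψd r).continuousAt
  have hψ00 : ψ 0 = 0 := by simp [hψ]
  have he0 : ∀ r, 0 ≤ e r := fun r => abs_nonneg _
  have hφ0 : ∀ r ∈ Icc 0 R, 0 ≤ φ r :=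
    nonneg_of_hasDerivAt hφc.continuousOn hφ00 (fun r _ => hφd r)
      (fun r _ => mul_nonneg hA0 (add_nonneg hε (he0 r)))
  have key : ∀ r ∈ Ioo 0 R, |r ^ (1 + α) * g r| ≤ r * (A * (ε + e r)) := by
    intro r hr
    rw [abs_mul, abs_of_nonneg (rpow_nonneg hr.1.le _), add_comm, rpow_add_one hr.1.ne',
      mul_comm _ r, mul_assoc, hee r (Ioo_subset_Icc_self hr)]
    apply mul_le_mul_of_nonneg_left _ hr.1.le
    apply mul_le_mul _ (hg r hr) (abs_nonneg _) hA0
    exact rpow_le_rpow hr.1.le hr.2.le hα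
  have hrφd : ∀ r, HasDerivAt (fun r => r * φ r) (φ r + r * (A * (ε + e r))) r := fun r => by
    refine ((hasDerivAt_id r).mul (hφd r)).congr_deriv ?_
    simp
  have hp : ∀ r ∈ Icc 0 R, 0 ≤ r * φ r + r * dd r := by
    apply nonneg_of_hasDerivAt (F' := fun r => (φ r + r * (A * (ε + e r))) + -(r ^ (1 + α) * g r))
      ((continuous_id.mul hφc).continuousOn.add hz) (by simp)
    · intro r hr; exact (hrφd r).add (hzd r hr)
    · intro r hr
      have := abs_le.1 (key r hr)
      linarith [hφ0 r (Ioo_subset_Icc_self hr), this.2]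
  have hm : ∀ r ∈ Icc 0 R, 0 ≤ r * φ r - r * dd r := by
    apply nonneg_of_hasDerivAt (F' := fun r => (φ r + r * (A * (ε + e r))) - -(r ^ (1 + α) * g r))
      ((continuous_id.mul hφc).continuousOn.sub hz) (by simp)
    · intro r hr; exact (hrφd r).sub (hzd r hr)
    · intro r hr
      have := abs_le.1 (key r hr)
      linarith [hφ0 r (Ioo_subset_Icc_self hr), this.1]
  have hdφ : ∀ r ∈ Ioo 0 R, |dd r| ≤ φ r := by
    intro r hr
    have h1 := hp r (Ioo_subset_Icc_self hr)
    have h2 := hm r (Ioo_subset_Icc_self hr)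
    rw [← mul_add] at h1
    rw [← mul_sub] at h2
    have h1 := nonneg_of_mul_nonneg_right h1 hr.1
    have h2 := nonneg_of_mul_nonneg_right h2 hr.1
    rw [abs_le]; constructor <;> linarith
  have hp' : ∀ r ∈ Icc 0 R, 0 ≤ ψ r + d r := by
    apply nonneg_of_hasDerivAt (F' := fun r => φ r + dd r)
      (hψc.continuousOn.add hd) (by simp [hψ00, hd0])
    · intro r hr; exact (hψd r).add (hdd r hr)
    · intro r hr; linarith [(abs_le.1 (hdφ r hr)).1]
  have hm' : ∀ r ∈ Icc 0 R, 0 ≤ ψ r - d r := by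
    apply nonneg_of_hasDerivAt (F' := fun r => φ r - dd r)
      (hψc.continuousOn.sub hd) (by simp [hψ00, hd0])
    · intro r hr; exact (hψd r).sub (hdd r hr)
    · intro r hr; linarith [(abs_le.1 (hdφ r hr)).2]
  have hdψ : ∀ r ∈ Icc 0 R, |d r| ≤ ψ r := by
    intro r hr
    have := hp' r hr
    have := hm' r hr
    rw [abs_le]; constructor <;> linarith
  have hψ0 : ∀ r ∈ Icc 0 R, 0 ≤ ψ r := fun r hr => (abs_nonneg _).trans (hdψ r hr)
  have hG : ∀ r ∈ Icc 0 R, ‖ψ r + φ r‖ ≤ gronwallBound 0 (1 + A) (A * ε) (r - 0) := by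
    apply norm_le_gronwallBound_of_norm_deriv_right_le (f' := fun r => φ r + A * (ε + e r))
      (hψc.add hφc).continuousOn
    · intro r hr; exact ((hψd r).add (hφd r)).hasDerivWithinAt
    · simp [hψ00, hφ00]
    · intro r hr
      have hr' := Ico_subset_Icc_self hr
      have h1 := hψ0 r hr'
      have h2 := hφ0 r hr'
      have h3 := hdψ r hr'
      have h4 := hee r hr'
      have h5 := he0 r
      simp only [Pi.add_apply]
      rw [Real.norm_of_nonneg (by positivity), Real.norm_of_nonneg (by positivity)]
      have : A * e r ≤ A * ψ r := mul_le_mul_of_nonneg_left (by linarith) hA0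
      nlinarith [mul_nonneg hA0 h2]
  intro r hr
  have hr' := Ioo_subset_Icc_self hr
  have h := hG r hr'
  rw [Real.norm_of_nonneg (add_nonneg (hψ0 r hr') (hφ0 r hr')), sub_zero] at h
  have hmono := gronwallBound_mono le_rfl (mul_nonneg hA0 hε) (by linarith : 0 ≤ 1 + A) hr.2.le
    (δ := 0)
  constructor
  · linarith [hdψ r hr', hφ0 r hr']
  · linarith [hdφ r hr, hψ0 r hr']

lemma exp_err {p C v : ℝ} (hC : 0 ≤ C) (hp : C < p) (h1 : -C ≤ v) (h2 : v ≤ 0) :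
    |(1 + v / p) ^ p - exp v| ≤ C ^ 2 / (p - C) := by
  have hp0 : 0 < p := by linarith
  have hpv : 0 < p + v := by linarith
  have hw : 0 < 1 + v / p := by
    have : 1 + v / p = (p + v) / p := by field_simp
    rw [this]; positivity
  have hle : (1 + v / p) ^ p ≤ exp v := by
    rw [rpow_def_of_pos hw]
    apply exp_le_exp.2
    have := Real.log_le_sub_one_of_pos hw
    calc _ ≤ (1 + v / p - 1) * p := mul_le_mul_of_nonneg_right this hp0.le
      _ = v := by field_simp; ring
  have hge : exp v * (1 - C ^ 2 / (p - C)) ≤ (1 + v / p) ^ p := by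
    rw [rpow_def_of_pos hw]
    have hl := Real.one_sub_inv_le_log_of_pos hw
    have h3 : v - C ^ 2 / (p - C) ≤ log (1 + v / p) * p := by
      have h4 : (1 - (1 + v / p)⁻¹) * p = v - v ^ 2 / (p + v) := by
        have : 1 + v / p = (p + v) / p := by field_simp
        rw [this]
        field_simp
        ring
      have h5 : v ^ 2 / (p + v) ≤ C ^ 2 / (p - C) := by
        apply div_le_div₀ (by positivity) (by nlinarith) (by linarith) (by linarith)
      have := mul_le_mul_of_nonneg_right hl hp0.le
      linarith
    calc exp v * (1 - C ^ 2 / (p - C)) ≤ exp v * exp (-(C ^ 2 / (p - C))) := by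
          apply mul_le_mul_of_nonneg_left _ (exp_pos _).le
          have := add_one_le_exp (-(C ^ 2 / (p - C)))
          linarith
      _ = exp (v - C ^ 2 / (p - C)) := by rw [← exp_add]; ring_nf
      _ ≤ _ := exp_le_exp.2 h3
  have hq : 0 ≤ C ^ 2 / (p - C) := div_nonneg (sq_nonneg _) (by linarith)
  have hev : exp v ≤ 1 := by simpa using exp_le_exp.2 h2
  rw [abs_le]; constructor
  · nlinarith
  · linarith

lemma exp_lip {a b : ℝ} (ha : a ≤ 0) (hb : b ≤ 0) : |exp a - exp b| ≤ |a - b| := by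
  wlog h : b ≤ a generalizing a b
  · rw [abs_sub_comm, abs_sub_comm a]; exact this hb ha (by linarith)
  rw [abs_of_nonneg (by linarith [exp_le_exp.2 h]), abs_of_nonneg (by linarith)]
  have h1 := add_one_le_exp (b - a)
  have h2 : exp b = exp a * exp (b - a) := by rw [← exp_add]; ring_nf
  have h3 : exp a ≤ 1 := by simpa using exp_le_exp.2 ha
  have := exp_pos a
  rw [h2]
  nlinarith

/-- Facts on the limit profile. -/
lemma U_facts {α : ℝ} (hα : 0 ≤ α) {U : ℝ → ℝ}
    (hU : ∀ r : ℝ, U r = Real.log (4 * (2 + α) ^ 4 / (2 * (2 + α) ^ 2 + r ^ (2 + α)) ^ 2)) :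
    U 0 = 0 ∧ deriv U 0 = 0 ∧ (∀ r, 0 ≤ r → U r ≤ 0) ∧
    (∀ r, 0 ≤ r → HasDerivAt U (deriv U r) r) ∧
    ContinuousOn (fun r => r * deriv U r) (Ici 0) ∧
    (∀ r, 0 < r → HasDerivAt (fun r => r * deriv U r) (-(r ^ (1 + α) * exp (U r))) r) := by
  have hb : 0 < 2 + α := by linarith
  have hD : ∀ r : ℝ, 0 ≤ r → 0 < 2 * (2 + α) ^ 2 + r ^ (2 + α) := fun r hr => by
    have := rpow_nonneg hr (2 + α); positivity
  have hrd : ∀ r : ℝ, HasDerivAt (fun r : ℝ => r ^ (2 + α)) ((2 + α) * r ^ (1 + α)) r := by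
    intro r
    have := Real.hasDerivAt_rpow_const (x := r) (p := 2 + α) (Or.inr (by linarith))
    rwa [show 2 + α - 1 = 1 + α by ring] at this
  have hUd : ∀ r, 0 ≤ r → HasDerivAt U
      (-2 * (2 + α) * r ^ (1 + α) / (2 * (2 + α) ^ 2 + r ^ (2 + α))) r := by
    intro r hr
    have hDr := hD r hr
    have h0 : HasDerivAt (fun r => (2 * (2 + α) ^ 2 + r ^ (2 + α)) ^ 2)
        (2 * (2 * (2 + α) ^ 2 + r ^ (2 + α)) * ((2 + α) * r ^ (1 + α))) r :=
      (((hrd r).const_add (2 * (2 + α) ^ 2)).pow 2).congr_deriv (by simp)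
    have h1 : HasDerivAt (fun r => 4 * (2 + α) ^ 4 / (2 * (2 + α) ^ 2 + r ^ (2 + α)) ^ 2) _ r :=
      (hasDerivAt_const r (4 * (2 + α) ^ 4)).div h0 (by positivity)
    have h2 := h1.log (by positivity)
    rw [show U = _ from funext hU]
    refine h2.congr_deriv ?_
    field_simp
    ring
  have hzE : ∀ r, 0 ≤ r → r * deriv U r =
      -2 * (2 + α) * r ^ (2 + α) / (2 * (2 + α) ^ 2 + r ^ (2 + α)) := by
    intro r hr
    rw [(hUd r hr).deriv]
    rcases hr.eq_or_lt with rfl | hr'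
    · simp [zero_rpow hb.ne']
    · rw [show 2 + α = 1 + α + 1 by ring, rpow_add_one hr'.ne']
      ring
  refine ⟨?_, ?_, ?_, ?_, ?_, ?_⟩
  · rw [hU, zero_rpow hb.ne']
    convert Real.log_one using 2
    field_simp
    ring
  · rw [(hUd 0 le_rfl).deriv, zero_rpow (by linarith)]; simp
  · intro r hr
    rw [hU]
    have h0 := rpow_nonneg hr (2 + α)
    have hDr := hD r hr
    apply Real.log_nonpos (by positivity)
    rw [div_le_one (by positivity)]
    nlinarith [mul_nonneg h0 (sq_nonneg (2 + α))]
  · intro r hr; exact (hUd r hr).differentiableAt.hasDerivAt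
  · apply ContinuousOn.congr _ (fun r hr => hzE r hr)
    have := Real.continuous_rpow_const (q := 2 + α) hb.le
    apply ContinuousOn.div (by fun_prop) (by fun_prop)
    intro r hr; exact (hD r hr).ne'
  · intro r hr
    have hDr := hD r hr.le
    have h1 := ((hrd r).const_mul (-2 * (2 + α))).div ((hrd r).const_add (2 * (2 + α) ^ 2)) hDr.ne'
    have h2 : (fun r => r * deriv U r) =ᶠ[nhds r]
        fun r => -2 * (2 + α) * r ^ (2 + α) / (2 * (2 + α) ^ 2 + r ^ (2 + α)) := by
      filter_upwards [lt_mem_nhds hr] with s hs using hzE s hs.le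
    refine HasDerivAt.congr_of_eventuallyEq ?_ h2
    refine h1.congr_deriv ?_
    rw [hU, exp_log (by positivity)]
    field_simp
    ring

/-- The rescaled equation. -/
lemma scaled {α p z ρ : ℝ} (hα : 0 ≤ α) {u v : ℝ → ℝ} (hp : 1 < p)
    (hreg1 : ContDiffOn ℝ 1 u (Icc 0 1)) (hreg2 : ContDiffOn ℝ 2 u (Ioo 0 1))
    (heq : ∀ r ∈ Ioo (0:ℝ) 1,
      deriv (fun s => s * deriv u s) r + r ^ (1 + α) * |u r| ^ (p - 1) * u r = 0)
    (hz : z ∈ Ioo (0:ℝ) 1) (hpos : ∀ r ∈ Ico (0:ℝ) z, 0 < u r)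
    (hneg : ∀ r ∈ Ioo z 1, u r < 0)
    (hρ : ρ = (p * |u 0| ^ (p - 1)) ^ (-(1 / (2 + α))))
    (hv : ∀ r, v r = p * (u (ρ * r) - u 0) / u 0) :
    0 < ρ ∧ ∃ dv : ℝ → ℝ, ContinuousOn v (Icc 0 (z / ρ)) ∧ v 0 = 0 ∧
      (∀ r ∈ Ioo 0 (z / ρ), HasDerivAt v (dv r) r) ∧
      ContinuousOn (fun r => r * dv r) (Icc 0 (z / ρ)) ∧
      (∀ r ∈ Ioo 0 (z / ρ),
        HasDerivAt (fun r => r * dv r) (-(r ^ (1 + α) * (1 + v r / p) ^ p)) r) ∧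
      (∀ r ∈ Ioo 0 (z / ρ), 0 < 1 + v r / p) ∧ v (z / ρ) ≤ -p := by
  have hp0 : 0 < p := by linarith
  have hb : 0 < 2 + α := by linarith
  have hm : 0 < u 0 := hpos 0 ⟨le_rfl, hz.1⟩
  set m := u 0 with hmdef
  rw [abs_of_pos hm] at hρ
  have hq : 0 < p * m ^ (p - 1) := mul_pos hp0 (rpow_pos_of_pos hm _)
  have hρ0 : 0 < ρ := by rw [hρ]; exact rpow_pos_of_pos hq _
  have hρb : ρ ^ (2 + α) * (p * m ^ (p - 1)) = 1 := by
    rw [hρ, ← rpow_mul hq.le, show -(1 / (2 + α)) * (2 + α) = -1 by field_simp, rpow_neg_one]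
    exact inv_mul_cancel₀ hq.ne'
  set du := derivWithin u (Icc 0 1) with hdu
  have hduc : ContinuousOn du (Icc 0 1) :=
    hreg1.continuousOn_derivWithin (uniqueDiffOn_Icc one_pos) le_rfl
  have hdue : ∀ s ∈ Ioo (0:ℝ) 1, du s = deriv u s := fun s hs =>
    derivWithin_of_mem_nhds (Icc_mem_nhds hs.1 hs.2)
  have hud : ∀ s ∈ Ioo (0:ℝ) 1, HasDerivAt u (du s) s := by
    intro s hs
    rw [hdue s hs]
    exact ((hreg1.differentiableOn one_ne_zero).differentiableAt
      (Icc_mem_nhds hs.1 hs.2)).hasDerivAt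
  have hsd : ∀ s ∈ Ioo (0:ℝ) 1,
      HasDerivAt (fun s => s * du s) (-(s ^ (1 + α) * |u s| ^ (p - 1) * u s)) s := by
    intro s hs
    have hnh : Ioo (0:ℝ) 1 ∈ nhds s := Ioo_mem_nhds hs.1 hs.2
    have h1 : DifferentiableAt ℝ (deriv u) s :=
      ((hreg2.deriv_of_isOpen (m := 1) isOpen_Ioo (by norm_num)).differentiableOn
        one_ne_zero).differentiableAt hnh
    have h2 : DifferentiableAt ℝ (fun s => s * deriv u s) s := differentiableAt_id.mul h1
    have h3 := h2.hasDerivAt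
    have h4 := heq s hs
    rw [show deriv (fun s => s * deriv u s) s = -(s ^ (1 + α) * |u s| ^ (p - 1) * u s) by
      linarith] at h3
    refine h3.congr_of_eventuallyEq ?_
    filter_upwards [hnh] with t ht
    rw [hdue t ht]
  have hmap : ∀ r ∈ Icc 0 (z / ρ), ρ * r ∈ Icc (0:ℝ) 1 := by
    intro r hr
    have := (le_div_iff₀ hρ0).1 hr.2
    exact ⟨mul_nonneg hρ0.le hr.1, by linarith [hz.2]⟩
  have hmapo : ∀ r ∈ Ioo 0 (z / ρ), ρ * r ∈ Ioo (0:ℝ) z := by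
    intro r hr
    have := (lt_div_iff₀ hρ0).1 hr.2
    exact ⟨mul_pos hρ0 hr.1, by linarith⟩
  have hmapo' : ∀ r ∈ Ioo 0 (z / ρ), ρ * r ∈ Ioo (0:ℝ) 1 := fun r hr =>
    ⟨(hmapo r hr).1, (hmapo r hr).2.trans hz.2⟩
  have hw : ∀ r, 1 + v r / p = u (ρ * r) / m := by
    intro r; rw [hv]; field_simp; ring
  have hveq : v = fun r => p * (u (ρ * r) - m) / m := funext hv
  have hlin : ∀ r, HasDerivAt (fun r => ρ * r) ρ r := fun r => by
    simpa using (hasDerivAt_id r).const_mul ρ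
  refine ⟨hρ0, fun r => p / m * (du (ρ * r) * ρ), ?_, ?_, ?_, ?_, ?_, ?_, ?_⟩
  · rw [hveq]
    have : ContinuousOn (fun r => u (ρ * r)) (Icc 0 (z / ρ)) :=
      hreg1.continuousOn.comp (by fun_prop) hmap
    exact (continuousOn_const.mul (this.sub continuousOn_const)).div_const _
  · rw [hv]; simp [hmdef]
  · intro r hr
    rw [hveq]
    have h1 : HasDerivAt (fun r => u (ρ * r)) (du (ρ * r) * ρ) r :=
      (hud _ (hmapo' r hr)).comp r (hlin r)
    refine (((h1.sub_const m).const_mul p).div_const m).congr_deriv ?_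
    ring
  · have : ContinuousOn (fun r => du (ρ * r)) (Icc 0 (z / ρ)) :=
      hduc.comp (by fun_prop) hmap
    exact continuousOn_id.mul (continuousOn_const.mul (this.mul continuousOn_const))
  · intro r hr
    have h1 : HasDerivAt (fun r => (ρ * r) * du (ρ * r)) _ r :=
      (hsd _ (hmapo' r hr)).comp r (hlin r)
    have h2 := h1.const_mul (p / m)
    have h3 : (fun r => r * (p / m * (du (ρ * r) * ρ))) =
        fun r => p / m * ((ρ * r) * du (ρ * r)) := by funext r; ring
    rw [h3]
    refine h2.congr_deriv ?_
    have hup : 0 < u (ρ * r) := hpos _ ⟨(hmapo r hr).1.le, (hmapo r hr).2⟩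
    rw [hw, abs_of_pos hup, mul_rpow hρ0.le hr.1.le, div_rpow hup.le hm.le]
    have e1 : u (ρ * r) ^ p = u (ρ * r) ^ (p - 1) * u (ρ * r) := by
      rw [← rpow_add_one hup.ne']; ring_nf
    have e2 : m ^ p = m ^ (p - 1) * m := by
      rw [← rpow_add_one hm.ne']; ring_nf
    have e3 : ρ ^ (2 + α) = ρ ^ (1 + α) * ρ := by
      rw [← rpow_add_one hρ0.ne']; ring_nf
    rw [e3] at hρb
    have hmp := rpow_pos_of_pos hm (p - 1)
    rw [e1, e2]
    generalize u (ρ * r) ^ (p - 1) = X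
    generalize m ^ (p - 1) = Y at *
    generalize ρ ^ (1 + α) = Z at *
    field_simp
    linear_combination (-(r ^ (1 + α) * X)) * hρb
  · intro r hr
    rw [hw]
    exact div_pos (hpos _ ⟨(hmapo r hr).1.le, (hmapo r hr).2⟩) hm
  · have huz : u z ≤ 0 := by
      have hc : ContinuousAt u z := hreg1.continuousOn.continuousAt (Icc_mem_nhds hz.1 hz.2)
      have ht : Tendsto u (nhdsWithin z (Ioi z)) (nhds (u z)) := hc.tendsto.mono_left inf_le_left
      apply le_of_tendsto ht
      filter_upwards [Ioo_mem_nhdsGT hz.2] with s hs using (hneg s hs).le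
    rw [hv, mul_div_cancel₀ _ hρ0.ne', div_le_iff₀ hm]
    nlinarith

/-- The rescalings `ũ_{1,p}(r) = p (u_p(ρ_p¹ r) - u_p(0))/u_p(0)` of the
least-energy nodal radial solution of the Hénon problem in its first nodal zone converge
in `C¹_loc([0,∞))` to `U(r) = log( 4(2+α)⁴ / (2(2+α)² + r^{2+α})² )` as `p → ∞`. -/
theorem henon_nodal_first_rescaling_convergence
    (α : ℝ) (hα : 0 ≤ α) (u : ℝ → ℝ → ℝ) (rz σ : ℝ → ℝ) (ρ₁ ρ₂ : ℝ → ℝ)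
    (hreg1 : ∀ p : ℝ, 1 < p → ContDiffOn ℝ 1 (u p) (Icc 0 1))
    (hreg2 : ∀ p : ℝ, 1 < p → ContDiffOn ℝ 2 (u p) (Ioo 0 1))
    (heq : ∀ p : ℝ, 1 < p → ∀ r ∈ Ioo (0:ℝ) 1,
      deriv (fun s => s * deriv (u p) s) r + r ^ (1 + α) * |u p r| ^ (p - 1) * u p r = 0)
    (hderiv0 : ∀ p : ℝ, 1 < p → deriv (u p) 0 = 0)
    (hbdry : ∀ p : ℝ, 1 < p → u p 1 = 0)
    (hrz : ∀ p : ℝ, 1 < p → rz p ∈ Ioo (0:ℝ) 1)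
    (hσmem : ∀ p : ℝ, 1 < p → σ p ∈ Ioo (rz p) 1)
    (hpos : ∀ p : ℝ, 1 < p → ∀ r ∈ Ico (0:ℝ) (rz p), 0 < u p r)
    (hneg : ∀ p : ℝ, 1 < p → ∀ r ∈ Ioo (rz p) 1, u p r < 0)
    (hσcrit : ∀ p : ℝ, 1 < p → deriv (u p) (σ p) = 0)
    (hcrit : ∀ p : ℝ, 1 < p → ∀ r ∈ Ico (0:ℝ) 1, deriv (u p) r = 0 → r = 0 ∨ r = σ p)
    (hρ₁ : ∀ p : ℝ, ρ₁ p = (p * |u p 0| ^ (p - 1)) ^ (-(1 / (2 + α))))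
    (hρ₂ : ∀ p : ℝ, ρ₂ p = (p * |u p (σ p)| ^ (p - 1)) ^ (-(1 / (2 + α))))
    (ut : ℝ → ℝ → ℝ)
    (hut : ∀ p r : ℝ, ut p r = p * (u p (ρ₁ p * r) - u p 0) / u p 0)
    (U : ℝ → ℝ)
    (hU : ∀ r : ℝ, U r = Real.log (4 * (2 + α) ^ 4 / (2 * (2 + α) ^ 2 + r ^ (2 + α)) ^ 2)) :
    ∀ K : Set ℝ, IsCompact K → K ⊆ Ici 0 →
      (∃ pK : ℝ, ∀ p > pK, ∀ r ∈ K, r < 1 / ρ₁ p) ∧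
      TendstoUniformlyOn (fun p r => ut p r) U atTop K ∧
      TendstoUniformlyOn (fun p r => deriv (ut p) r) (deriv U) atTop K := by
  intro K hK hK0
  have hb : 0 < 2 + α := by linarith
  obtain ⟨hU0, hU0', hUle, hUd, hUz, hUzd⟩ := U_facts hα hU
  -- a radius containing `K`
  obtain ⟨R, hR, hKR⟩ : ∃ R : ℝ, 0 < R ∧ ∀ r ∈ K, r < R := by
    obtain ⟨B, hB⟩ := hK.bddAbove
    exact ⟨max B 0 + 1, by positivity, fun r hr => by
      linarith [hB hr, le_max_left B 0]⟩
  set C := R ^ (2 + α) / (2 + α) ^ 2 with hC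
  have hRb : 0 ≤ R ^ (2 + α) := rpow_nonneg hR.le _
  have hC0 : 0 ≤ C := by positivity
  set G : ℝ → ℝ := fun p => gronwallBound 0 (1 + R ^ α) (R ^ α * (C ^ 2 / (p - C))) R with hG
  have hGt : Tendsto G atTop (nhds 0) := by
    have h1 : Tendsto (fun p : ℝ => p - C) atTop atTop :=
      tendsto_atTop_add_const_right _ _ tendsto_id
    have h2 : Tendsto (fun p : ℝ => R ^ α * (C ^ 2 / (p - C))) atTop (nhds 0) := by
      simpa using (h1.const_div_atTop (C ^ 2)).const_mul (R ^ α)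
    have h3 := ((gronwallBound_continuous_ε 0 (1 + R ^ α) R).tendsto 0).comp h2
    rwa [gronwallBound_ε0, zero_mul] at h3
  -- main estimate for a single exponent
  have main : ∀ p, 1 < p → C < p → R < 1 / ρ₁ p ∧
      ∀ r ∈ Ico 0 R, |ut p r - U r| ≤ |G p| ∧ |deriv (ut p) r - deriv U r| ≤ |G p| := by
    intro p hp hCp
    have hp0 : 0 < p := by linarith
    obtain ⟨hρ0, dv, hvc, hv0, hvd, hzc, hzd, hw, hvS⟩ := scaled hα hp (hreg1 p hp) (hreg2 p hp)
      (heq p hp) (hrz p hp) (hpos p hp) (hneg p hp) (hρ₁ p) (hut p)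
    set S := rz p / ρ₁ p with hS
    have hS0 : 0 < S := div_pos (hrz p hp).1 hρ0
    obtain ⟨hle, hge⟩ := apriori hα hvc hv0 hvd hzc hzd
      (fun r hr => rpow_nonneg (hw r hr).le _)
      (fun h r hr => rpow_le_one (hw r hr).le
        (by linarith [div_nonpos_of_nonpos_of_nonneg (h r hr) hp0.le]) hp0.le)
    have hRS : R < S := by
      by_contra! h
      have h1 := hge S ⟨hS0.le, le_rfl⟩
      have h2 : S ^ (2 + α) / (2 + α) ^ 2 ≤ C := by
        rw [hC]
        have := rpow_le_rpow hS0.le h hb.le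
        gcongr
      linarith
    have hsub : Icc 0 R ⊆ Icc 0 S := Icc_subset_Icc_right hRS.le
    have hsubo : Ioo 0 R ⊆ Ioo 0 S := Ioo_subset_Ioo_right hRS.le
    have hε : 0 ≤ C ^ 2 / (p - C) := div_nonneg (sq_nonneg _) (by linarith)
    have hest := gron (d := fun r => ut p r - U r) (dd := fun r => dv r - deriv U r)
      (g := fun r => (1 + ut p r / p) ^ p - exp (U r)) hα hR hε
      ((hvc.mono hsub).sub fun r hr => (hUd r hr.1).continuousAt.continuousWithinAt)
      (by simp [hv0, hU0])
      (fun r hr => (hvd r (hsubo hr)).sub (hUd r hr.1.le))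
      (by
        refine ((hzc.mono hsub).sub (hUz.mono Icc_subset_Ici_self)).congr ?_
        intro r _
        simp [mul_sub])
      (by
        intro r hr
        have := ((hzd r (hsubo hr)).sub (hUzd r hr.1)).congr_deriv
          (show _ = -(r ^ (1 + α) * ((1 + ut p r / p) ^ p - exp (U r))) by ring)
        refine this.congr_of_eventuallyEq (Eventually.of_forall fun s => ?_)
        simp [mul_sub])
      (by
        intro r hr
        have hr' := hsub (Ioo_subset_Icc_self hr)
        have h1 := hle r hr'
        have h2 := hge r hr'
        have h3 : r ^ (2 + α) / (2 + α) ^ 2 ≤ C := by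
          rw [hC]
          have := rpow_le_rpow hr.1.le hr.2.le hb.le
          gcongr
        have h4 := exp_err hC0 hCp (by linarith) h1
        have h5 := exp_lip h1 (hUle r hr.1.le)
        calc _ ≤ _ := abs_sub_le _ (exp (ut p r)) _
          _ ≤ _ := add_le_add h4 h5)
    refine ⟨hRS.trans ?_, ?_⟩
    · rw [hS]; exact div_lt_div_of_pos_right (hrz p hp).2 hρ0
    · intro r hr
      rcases hr.1.eq_or_lt with rfl | hr0
      · have hd0 : deriv (ut p) 0 = 0 := by
          have h1 : ut p = fun r => p * (u p (ρ₁ p * r) - u p 0) / u p 0 := funext (hut p)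
          rw [h1, deriv_div_const, deriv_const_mul_field, deriv_sub_const,
            deriv_comp_mul_left, mul_zero, hderiv0 p hp]
          simp
        simp [hv0, hU0, hd0, hU0']
      · have h := hest r ⟨hr0, hr.2⟩
        rw [(hvd r (hsubo ⟨hr0, hr.2⟩)).deriv]
        exact ⟨h.1.trans (le_abs_self _), h.2.trans (le_abs_self _)⟩
  have hGe : ∀ ε > 0, ∀ᶠ p in atTop, |G p| < ε := by
    intro ε hε
    have := Metric.tendsto_nhds.1 hGt ε hε
    simpa [Real.dist_eq] using this
  refine ⟨⟨max 1 C, fun p hp r hr => ?_⟩, ?_, ?_⟩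
  · have h1 := (max_lt_iff.1 hp)
    exact (hKR r hr).trans (main p h1.1 h1.2).1
  · rw [Metric.tendstoUniformlyOn_iff]
    intro ε hε
    filter_upwards [hGe ε hε, eventually_gt_atTop 1, eventually_gt_atTop C] with p h1 h2 h3 r hr
    rw [dist_comm, Real.dist_eq]
    exact ((main p h2 h3).2 r ⟨hK0 hr, hKR r hr⟩).1.trans_lt h1
  · rw [Metric.tendstoUniformlyOn_iff]
    intro ε hε
    filter_upwards [hGe ε hε, eventually_gt_atTop 1, eventually_gt_atTop C] with p h1 h2 h3 r hr
    rw [dist_comm, Real.dist_eq]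
    exact ((main p h2 h3).2 r ⟨hK0 hr, hKR r hr⟩).2.trans_lt h1
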